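/- Let p be an integer with p ≥ 2, let BS(1,p) be the Baumslag–Solitar group presented by generators a, t and defining relator t·a·t⁻¹·a^{−p}, and let A be the four-element symmetric generating set {a, a⁻¹, t, t⁻¹} (a four-element type mapping to the images of a, a⁻¹, t, t⁻¹ in BS(1,p), with the evident inversion involution). Then the pair (BS(1,p), A) is stackable, with normal form set C = { t^{−i} a^m t^k (written as a word over A) : i, k ∈ ℕ, m ∈ ℤ, and (p ∤ m or i = 0 or k = 0) }. -/

import Mathlib

namespace Stk

variable {G : Type*} [Group G] {A : Type*}

/-- Evaluation of a word over the generating alphabet in the group. -/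
def eval (ρ : A → G) (w : List A) : G := (w.map ρ).prod

/-- `C` is a set of normal forms: evaluation restricted to `C` is a bijection onto `G`. -/
def IsNormalFormSet (ρ : A → G) (C : Set (List A)) : Prop :=
  ∀ g : G, ∃! w : List A, w ∈ C ∧ eval ρ w = g

/-- The directed edge `(g, a)` of the Cayley graph is degenerate with respect to `C`. -/
def IsDegenerate (ρ : A → G) (ι : A → A) (C : Set (List A)) (e : G × A) : Prop :=
  ∃ y₁ y₂ : List A, y₁ ∈ C ∧ eval ρ y₁ = e.1 ∧ y₂ ∈ C ∧ eval ρ y₂ = e.1 * ρ e.2 ∧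
    (y₁ ++ [e.2] = y₂ ∨ y₁ = y₂ ++ [ι e.2])

/-- A non-degenerate edge is recursive. -/
def IsRecursive (ρ : A → G) (ι : A → A) (C : Set (List A)) (e : G × A) : Prop :=
  ¬ IsDegenerate ρ ι C e

/-- `e` is one of the edges along the path starting at `g` labeled by the word `w`. -/
def EdgeOnPath (ρ : A → G) (g : G) (w : List A) (e : G × A) : Prop :=
  ∃ i : Fin w.length, e = (g * eval ρ (w.take i), w.get i)

/-- A stackable structure for `(G, A)`: a normal form set `C` containing the empty word,
a well-founded strict partial order `lt` on the recursive edges, and a constant `k`,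
such that each edge `(g, a)` admits a word of length at most `k` evaluating to `ρ a`,
each of whose edges along the path from `g` is degenerate or recursive and `lt`-below
`(g, a)`. -/
def IsStackableStructure (ρ : A → G) (ι : A → A) (C : Set (List A))
    (lt : G × A → G × A → Prop) (k : ℕ) : Prop :=
  ([] : List A) ∈ C ∧ IsNormalFormSet ρ C ∧
  (∀ e e' : G × A, lt e e' → IsRecursive ρ ι C e ∧ IsRecursive ρ ι C e') ∧
  Transitive lt ∧ WellFounded lt ∧
  ∀ g : G, ∀ a : A, ∃ w : List A, w.length ≤ k ∧ eval ρ w = ρ a ∧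
    ∀ e' : G × A, EdgeOnPath ρ g w e' → IsDegenerate ρ ι C e' ∨ lt e' (g, a)

/-- The pair `(G, A)` is stackable. -/
def IsStackable (ρ : A → G) (ι : A → A) : Prop :=
  ∃ (C : Set (List A)) (lt : G × A → G × A → Prop) (k : ℕ),
    IsStackableStructure ρ ι C lt k

/-- A stacking map for a stackable structure. -/
def IsStackingMap (ρ : A → G) (ι : A → A) (C : Set (List A))
    (lt : G × A → G × A → Prop) (k : ℕ) (Φ : G × A → List A) : Prop :=
  ∀ e : G × A, IsRecursive ρ ι C e →
    eval ρ (Φ e) = ρ e.2 ∧ (Φ e).length ≤ k ∧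
    ∀ e' : G × A, EdgeOnPath ρ e.1 (Φ e) e' → IsDegenerate ρ ι C e' ∨ lt e' e

/-- A stacking map extended by `Φ (g, a) = [a]` on degenerate edges. -/
def IsExtendedStackingMap (ρ : A → G) (ι : A → A) (C : Set (List A))
    (lt : G × A → G × A → Prop) (k : ℕ) (Φ : G × A → List A) : Prop :=
  (∀ e : G × A, IsDegenerate ρ ι C e → Φ e = [e.2]) ∧ IsStackingMap ρ ι C lt k Φ

/-- A word is freely reduced if no letter is followed by its formal inverse. -/
def FreelyReduced (ι : A → A) (w : List A) : Prop :=
  List.Chain' (fun a b => b ≠ ι a) w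


/-- The Baumslag–Solitar group `BS(1, p)`, presented by generators `a`, `t` (the images of
`false`, `true`) and the single defining relator `t * a * t⁻¹ * a ^ (-p)`. -/
def BaumslagSolitar (p : ℤ) : Type :=
  PresentedGroup ({FreeGroup.of true * FreeGroup.of false * (FreeGroup.of true)⁻¹ *
    (FreeGroup.of false) ^ (-p)} : Set (FreeGroup Bool))

instance (p : ℤ) : Group (BaumslagSolitar p) :=
  inferInstanceAs (Group (PresentedGroup _))

/-- The generator `a` of `BS(1, p)`. -/
def BaumslagSolitar.a (p : ℤ) : BaumslagSolitar p := PresentedGroup.of false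

/-- The generator `t` of `BS(1, p)`. -/
def BaumslagSolitar.t (p : ℤ) : BaumslagSolitar p := PresentedGroup.of true

/-- The word `t⁻ⁱ aᵐ tᵏ` over the four-letter alphabet `{a, a⁻¹, t, t⁻¹}`, encoded as
`Fin 4` with `0 ↦ a`, `1 ↦ a⁻¹`, `2 ↦ t`, `3 ↦ t⁻¹`. -/
def bsWord (i : ℕ) (m : ℤ) (k : ℕ) : List (Fin 4) :=
  List.replicate i 3 ++
    (if 0 ≤ m then List.replicate m.toNat 0 else List.replicate (-m).toNat 1) ++
    List.replicate k 2

/-!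
Every element of `BS(1, p)` has the form `t⁻ⁱ aᵐ tᵏ`. Cancelling `t⁻¹ aᵖᵐ t = aᵐ` as long as
possible leads to a reduced triple `(i, m, k)`, which is unique for `p ≠ 0`: the exponent sum of `t`
determines `k - i`, and the affine action `a : x ↦ x + 1`, `t : x ↦ p x` on `ℚ` determines
`m / pⁱ`.

A recursive edge labelled `a^ε`, `ε = ±1`, starts at a normal form `t⁻ⁱ aᵐ tᵏ` with `k > 0`, and
the path `t⁻¹ a^(p ε) t` replaces it by edges with smaller `k`. A recursive edge labelled `t` starts
at some `t⁻ⁱ a^(p m)` with `i > 0` and `m ≠ 0`, and one labelled `t⁻¹` at some `t⁻ⁱ aᵐ` with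
`m ≠ 0`. For `ε = sign m`, the paths `a^(-p ε) t a^ε` and `a^(-ε) t⁻¹ a^(p ε)` move this edge to a
place where `|m|` is smaller, and all their other edges are degenerate.
-/

section Paths

variable {ρ : A → G} {g : G} {e : G × A}

@[simp] theorem eval_nil : eval ρ [] = 1 := rfl

@[simp] theorem eval_cons (x : A) (w : List A) : eval ρ (x :: w) = ρ x * eval ρ w := by
  simp [eval]

@[simp] theorem eval_append (u v : List A) : eval ρ (u ++ v) = eval ρ u * eval ρ v := by
  simp [eval]

@[simp] theorem eval_replicate (n : ℕ) (x : A) : eval ρ (List.replicate n x) = ρ x ^ n := by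
  simp [eval]

@[simp] theorem not_edgeOnPath_nil : ¬ EdgeOnPath ρ g [] e :=
  fun ⟨i, _⟩ => i.elim0

@[simp] theorem edgeOnPath_cons {x : A} {w : List A} :
    EdgeOnPath ρ g (x :: w) e ↔ e = (g, x) ∨ EdgeOnPath ρ (g * ρ x) w e := by
  constructor
  · rintro ⟨i, rfl⟩
    induction i using Fin.cases with
    | zero => left; simp
    | succ i => right; exact ⟨i, by simp [mul_assoc]⟩
  · rintro (rfl | ⟨i, rfl⟩)
    · exact ⟨0, by simp⟩
    · exact ⟨i.succ, by simp [mul_assoc]⟩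

@[simp] theorem edgeOnPath_append {u v : List A} :
    EdgeOnPath ρ g (u ++ v) e ↔ EdgeOnPath ρ g u e ∨ EdgeOnPath ρ (g * eval ρ u) v e := by
  induction u generalizing g with
  | nil => simp
  | cons x u ih => simp [ih, or_assoc, mul_assoc]

theorem EdgeOnPath.exists_pow_of_replicate {n : ℕ} {x : A}
    (h : EdgeOnPath ρ g (List.replicate n x) e) : ∃ j : ℕ, e = (g * ρ x ^ j, x) := by
  induction n generalizing g with
  | zero => simp at h
  | succ n ih =>
    rw [List.replicate_succ, edgeOnPath_cons] at h
    rcases h with rfl | h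
    · exact ⟨0, by simp⟩
    · obtain ⟨j, rfl⟩ := ih h
      exact ⟨j + 1, by rw [pow_succ', mul_assoc]⟩

end Paths

section Stackable

variable {ρ : A → G} {ι : A → A} {C : Set (List A)} {x : A} {y : List A}

theorem isDegenerate_of_append_mem (hy : y ∈ C) (hyx : y ++ [x] ∈ C) :
    IsDegenerate ρ ι C (eval ρ y, x) :=
  ⟨y, y ++ [x], hy, rfl, hyx, by simp, .inl rfl⟩

theorem isDegenerate_of_append_inv_mem (hx : ρ (ι x) = (ρ x)⁻¹) (hy : y ∈ C)
    (hyx : y ++ [ι x] ∈ C) : IsDegenerate ρ ι C (eval ρ (y ++ [ι x]), x) :=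
  ⟨y ++ [ι x], y, hyx, rfl, hy, by simp [hx], .inr rfl⟩

namespace IsNormalFormSet

/-- The normal form `y_g` of a group element `g`. -/
noncomputable def word (hC : IsNormalFormSet ρ C) (g : G) : List A := (hC g).choose

theorem word_eval (hC : IsNormalFormSet ρ C) (hy : y ∈ C) : hC.word (eval ρ y) = y :=
  ((hC (eval ρ y)).choose_spec.2 y ⟨hy, rfl⟩).symm

end IsNormalFormSet

variable {β : Type*}

/-- The edge `e` can be rerouted along a path of length at most `k` all of whose edges are
degenerate or of smaller rank than `e`. This is the recursive clause of stackability, for an order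
on edges given by a rank function `r`. -/
def IsReroutable [LT β] (ρ : A → G) (ι : A → A) (C : Set (List A)) (r : G × A → β) (k : ℕ)
    (e : G × A) : Prop :=
  ∃ w : List A, w.length ≤ k ∧ eval ρ w = ρ e.2 ∧
    ∀ e', EdgeOnPath ρ e.1 w e' → IsDegenerate ρ ι C e' ∨ r e' < r e

theorem exists_isStackableStructure_of_rank [Preorder β] [WellFoundedLT β] {r : G × A → β} {k : ℕ}
    (hnil : [] ∈ C) (hC : IsNormalFormSet ρ C) (hk : 1 ≤ k)
    (h : ∀ e, IsDegenerate ρ ι C e ∨ IsReroutable ρ ι C r k e) :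
    ∃ lt, IsStackableStructure ρ ι C lt k := by
  refine ⟨fun e e' => IsRecursive ρ ι C e ∧ IsRecursive ρ ι C e' ∧ r e < r e', hnil, hC,
    fun _ _ h => ⟨h.1, h.2.1⟩, fun _ _ _ h h' => ⟨h.1, h'.2.1, h.2.2.trans h'.2.2⟩,
    Subrelation.wf (fun h => h.2.2) (InvImage.wf r wellFounded_lt), fun g x => ?_⟩
  by_cases hx : IsDegenerate ρ ι C (g, x)
  · exact ⟨[x], hk, by simp, by simp [hx]⟩
  · obtain ⟨w, hw, hwx, hpath⟩ := (h (g, x)).resolve_left hx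
    refine ⟨w, hw, hwx, fun e' he' => or_iff_not_imp_left.2 fun hd => ⟨hd, hx, ?_⟩⟩
    exact (hpath e' he').resolve_left hd

end Stackable

/-- The word `aᵐ`, the middle part of `bsWord i m k`. -/
def aWord (m : ℤ) : List (Fin 4) := List.replicate m.natAbs (if 0 ≤ m then 0 else 1)

theorem bsWord_eq (i : ℕ) (m : ℤ) (k : ℕ) :
    bsWord i m k = List.replicate i 3 ++ aWord m ++ List.replicate k 2 := by
  have : (if 0 ≤ m then List.replicate m.toNat 0 else List.replicate (-m).toNat 1) = aWord m := by
    unfold aWord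
    split_ifs <;> congr 1 <;> omega
  rw [bsWord, this]

@[simp] theorem length_aWord (m : ℤ) : (aWord m).length = m.natAbs := by
  simp [aWord]

theorem aWord_add_one {m : ℤ} (hm : 0 ≤ m) : aWord (m + 1) = aWord m ++ [0] := by
  simp [aWord, hm, Int.natAbs_add_of_nonneg hm, List.replicate_add, show 0 ≤ m + 1 by omega]

theorem aWord_sub_one {m : ℤ} (hm : m ≤ 0) : aWord (m - 1) = aWord m ++ [1] := by
  obtain rfl | hm := hm.eq_or_lt
  · rfl
  · rw [aWord, aWord, if_neg (by omega), if_neg (by omega), ← List.replicate_succ']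
    congr 1
    omega

theorem bsWord_add_one {i : ℕ} {m : ℤ} (hm : 0 ≤ m) :
    bsWord i (m + 1) 0 = bsWord i m 0 ++ [0] := by
  simp [bsWord_eq, aWord_add_one hm]

theorem bsWord_sub_one {i : ℕ} {m : ℤ} (hm : m ≤ 0) :
    bsWord i (m - 1) 0 = bsWord i m 0 ++ [1] := by
  simp [bsWord_eq, aWord_sub_one hm]

theorem bsWord_succ_right (i : ℕ) (m : ℤ) (k : ℕ) : bsWord i m (k + 1) = bsWord i m k ++ [2] := by
  simp [bsWord_eq, List.replicate_succ']

theorem bsWord_succ_left (i : ℕ) : bsWord (i + 1) 0 0 = bsWord i 0 0 ++ [3] := by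
  simp [bsWord_eq, aWord, List.replicate_succ']

theorem count_two_bsWord (i : ℕ) (m : ℤ) (k : ℕ) : (bsWord i m k).count 2 = k := by
  rw [bsWord_eq, aWord]
  split_ifs <;> simp [List.count_replicate]

theorem count_zero_add_count_one_bsWord (i : ℕ) (m : ℤ) (k : ℕ) :
    (bsWord i m k).count 0 + (bsWord i m k).count 1 = m.natAbs := by
  rw [bsWord_eq, aWord]
  split_ifs <;> simp [List.count_replicate]

theorem natAbs_sub_sign_lt {m : ℤ} (hm : m ≠ 0) : (m - m.sign).natAbs < m.natAbs := by
  rcases hm.lt_or_gt with h | h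
  · rw [Int.sign_eq_neg_one_of_neg h]
    omega
  · rw [Int.sign_eq_one_of_pos h]
    omega

namespace BaumslagSolitar

variable {p : ℤ}

section Relation

theorem closure_a_t (p : ℤ) : Subgroup.closure {a p, t p} = ⊤ :=
  (congrArg Subgroup.closure (Bool.range_eq _).symm).trans (PresentedGroup.closure_range_of _)

theorem semiconjBy_t_a (p : ℤ) : SemiconjBy (t p) (a p) (a p ^ p) := by
  have h : t p * a p * (t p)⁻¹ * a p ^ (-p) = 1 := PresentedGroup.one_of_mem rfl
  rwa [zpow_neg, mul_inv_eq_one, mul_inv_eq_iff_eq_mul] at h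

theorem t_mul_a_zpow (p j : ℤ) : t p * a p ^ j = a p ^ (p * j) * t p := by
  rw [zpow_mul]
  exact (semiconjBy_t_a p).zpow_right j

theorem t_pow_mul_a_zpow (p j : ℤ) (k : ℕ) :
    t p ^ k * a p ^ j = a p ^ (p ^ k * j) * t p ^ k := by
  induction k generalizing j with
  | zero => simp
  | succ k ih =>
    calc t p ^ (k + 1) * a p ^ j
        = t p ^ k * a p ^ (p * j) * t p := by rw [pow_succ, mul_assoc, t_mul_a_zpow, mul_assoc]
      _ = a p ^ (p ^ (k + 1) * j) * t p ^ (k + 1) := by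
        rw [ih, mul_assoc, ← pow_succ, ← mul_assoc, ← pow_succ]

variable {H : Type*} [Group H]

/-- The universal property of `BS(1, p)`: the homomorphism sending `a` to `α` and `t` to `τ`. -/
def lift {α τ : H} (h : τ * α = α ^ p * τ) : BaumslagSolitar p →* H :=
  PresentedGroup.toGroup (f := fun b => bif b then τ else α) <| by
    rintro _ rfl
    simpa [mul_inv_eq_one, mul_inv_eq_iff_eq_mul] using h

@[simp] theorem lift_a {α τ : H} (h : τ * α = α ^ p * τ) : lift h (a p) = α :=
  PresentedGroup.toGroup.of _

@[simp] theorem lift_t {α τ : H} (h : τ * α = α ^ p * τ) : lift h (t p) = τ :=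
  PresentedGroup.toGroup.of _

/-- The exponent sum of `t`. -/
def tExponent (p : ℤ) : BaumslagSolitar p →* Multiplicative ℤ :=
  lift (α := 1) (τ := .ofAdd 1) (by simp)

/-- The affine action on `ℚ` in which `a` translates by `1` and `t` scales by `p`. -/
def affineAction (hp : p ≠ 0) : BaumslagSolitar p →* Equiv.Perm ℚ :=
  lift (α := Equiv.addRight 1)
    (τ := Equiv.mulLeft₀ (p : ℚ) (Int.cast_ne_zero.2 hp)) <| by
      ext x
      simp [mul_add]

theorem affineAction_a_zpow (hp : p ≠ 0) (m : ℤ) (x : ℚ) :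
    affineAction hp (a p ^ m) x = x + m := by
  rw [map_zpow, affineAction, lift_a]
  simp

theorem affineAction_t_pow (hp : p ≠ 0) (k : ℕ) (x : ℚ) :
    affineAction hp (t p ^ k) x = p ^ k * x := by
  induction k generalizing x with
  | zero => simp
  | succ k ih =>
    rw [pow_succ, map_mul, Equiv.Perm.mul_apply, ih, affineAction, lift_t, pow_succ, mul_assoc]
    rfl

end Relation

section NormalForm

/-- The element `t⁻ⁱ aᵐ tᵏ`. -/
def elt (p : ℤ) (i : ℕ) (m : ℤ) (k : ℕ) : BaumslagSolitar p := (t p)⁻¹ ^ i * a p ^ m * t p ^ k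

/-- The expression `t⁻ⁱ aᵐ tᵏ` is a normal form, i.e. no pair `t⁻¹ ⋯ t` in it can be cancelled by
`t⁻¹ aᵖⁿ t = aⁿ`. -/
def IsReduced (p : ℤ) (i : ℕ) (m : ℤ) (k : ℕ) : Prop := ¬ p ∣ m ∨ i = 0 ∨ k = 0

variable {i k : ℕ} {m : ℤ}

theorem elt_mul_a_zpow (p : ℤ) (i : ℕ) (m : ℤ) (k : ℕ) (j : ℤ) :
    elt p i m k * a p ^ j = elt p i (m + p ^ k * j) k := by
  rw [elt, mul_assoc, t_pow_mul_a_zpow, ← mul_assoc, mul_assoc _ (a p ^ m), ← zpow_add, elt]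

theorem elt_mul_t (p : ℤ) (i : ℕ) (m : ℤ) (k : ℕ) : elt p i m k * t p = elt p i m (k + 1) := by
  rw [elt, mul_assoc, ← pow_succ, elt]

theorem elt_succ_mul_t_inv (p : ℤ) (i : ℕ) (m : ℤ) (k : ℕ) :
    elt p i m (k + 1) * (t p)⁻¹ = elt p i m k := by
  rw [← elt_mul_t, mul_inv_cancel_right]

theorem elt_succ_mul_succ (p : ℤ) (i : ℕ) (m : ℤ) (k : ℕ) :
    elt p (i + 1) (p * m) (k + 1) = elt p i m k := by
  calc elt p (i + 1) (p * m) (k + 1)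
      = (t p)⁻¹ ^ i * (t p)⁻¹ * (a p ^ (p * m) * t p) * t p ^ k := by
        rw [elt, pow_succ, pow_succ']; simp only [mul_assoc]
    _ = elt p i m k := by rw [← t_mul_a_zpow, elt, mul_assoc _ (t p)⁻¹, inv_mul_cancel_left]

theorem elt_zero_mul_t_inv (p : ℤ) (i : ℕ) (m : ℤ) :
    elt p i m 0 * (t p)⁻¹ = elt p (i + 1) (p * m) 0 := by
  rw [← elt_succ_mul_succ, elt_succ_mul_t_inv]

theorem exists_elt_eq (g : BaumslagSolitar p) : ∃ i m k, elt p i m k = g := by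
  have hg : g ∈ Subgroup.closure {a p, t p} := closure_a_t p ▸ Subgroup.mem_top g
  induction hg using Subgroup.closure_induction_right with
  | one => exact ⟨0, 0, 0, by simp [elt]⟩
  | mul_right g _ y hy ih =>
    obtain ⟨i, m, k, rfl⟩ := ih
    obtain rfl | rfl := hy
    · exact ⟨i, _, k, by rw [← elt_mul_a_zpow _ _ _ _ 1, zpow_one]⟩
    · exact ⟨i, m, k + 1, (elt_mul_t p i m k).symm⟩
  | mul_inv_cancel g _ y hy ih =>
    obtain ⟨i, m, k, rfl⟩ := ih
    obtain rfl | rfl := hy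
    · exact ⟨i, _, k, by rw [← elt_mul_a_zpow _ _ _ _ (-1), zpow_neg_one]⟩
    · cases k with
      | zero => exact ⟨i + 1, p * m, 0, (elt_zero_mul_t_inv p i m).symm⟩
      | succ k => exact ⟨i, m, k, (elt_succ_mul_t_inv p i m k).symm⟩

theorem isReduced_zero_right : IsReduced p i m 0 := .inr (.inr rfl)

theorem IsReduced.of_succ_right (h : IsReduced p i m (k + 1)) : IsReduced p i m k :=
  h.imp_right fun h => .inl (h.resolve_right k.succ_ne_zero)

theorem IsReduced.add_pow_mul (h : IsReduced p i m k) (j : ℤ) :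
    IsReduced p i (m + p ^ k * j) k := by
  cases k with
  | zero => exact isReduced_zero_right
  | succ k => rwa [IsReduced, dvd_add_left ((dvd_pow_self p k.succ_ne_zero).mul_right j)]

theorem exists_isReduced_elt_eq (g : BaumslagSolitar p) :
    ∃ i m k, IsReduced p i m k ∧ elt p i m k = g := by
  obtain ⟨i, m, k, rfl⟩ := exists_elt_eq g
  induction i generalizing m k with
  | zero => exact ⟨0, m, k, .inr (.inl rfl), rfl⟩
  | succ i ih =>
    by_cases h : IsReduced p (i + 1) m k
    · exact ⟨i + 1, m, k, h, rfl⟩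
    · obtain ⟨⟨n, rfl⟩, -, hk⟩ : p ∣ m ∧ i + 1 ≠ 0 ∧ k ≠ 0 := by simpa [IsReduced] using h
      obtain ⟨k, rfl⟩ := Nat.exists_eq_succ_of_ne_zero hk
      rw [Nat.succ_eq_add_one, elt_succ_mul_succ]
      exact ih n k

theorem tExponent_elt (p : ℤ) (i : ℕ) (m : ℤ) (k : ℕ) :
    (tExponent p (elt p i m k)).toAdd = k - i := by
  simp [elt, tExponent, sub_eq_neg_add]

theorem affineAction_elt_zero (hp : p ≠ 0) (i : ℕ) (m : ℤ) (k : ℕ) :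
    (p : ℚ) ^ i * affineAction hp (elt p i m k) 0 = m := by
  have h : t p ^ i * elt p i m k = a p ^ m * t p ^ k := by
    rw [elt, inv_pow, mul_assoc _⁻¹, mul_inv_cancel_left]
  calc (p : ℚ) ^ i * affineAction hp (elt p i m k) 0
      = affineAction hp (t p ^ i * elt p i m k) 0 := by
        rw [map_mul, Equiv.Perm.mul_apply, affineAction_t_pow]
    _ = affineAction hp (a p ^ m) (affineAction hp (t p ^ k) 0) := by
        rw [h, map_mul, Equiv.Perm.mul_apply]
    _ = m := by rw [affineAction_t_pow, affineAction_a_zpow, mul_zero, zero_add]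

theorem eq_mul_pow_of_elt_eq (hp : p ≠ 0) {d k' : ℕ} {m' : ℤ}
    (h : elt p i m k = elt p (i + d) m' k') : m' = m * p ^ d ∧ k' = k + d := by
  constructor
  · have hm : (m' : ℚ) = m * (p : ℚ) ^ d := by
      rw [← affineAction_elt_zero hp (i + d) m' k', ← affineAction_elt_zero hp i m k, h, pow_add]
      ring
    exact_mod_cast hm
  · have hk := congrArg (fun g => (tExponent p g).toAdd) h
    simp only [tExponent_elt] at hk
    omega

theorem IsReduced.eq_of_elt_eq (hp : p ≠ 0) {i' k' : ℕ} {m' : ℤ} (h : IsReduced p i m k)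
    (h' : IsReduced p i' m' k') (heq : elt p i m k = elt p i' m' k') :
    i = i' ∧ m = m' ∧ k = k' := by
  wlog hle : i ≤ i' generalizing i m k i' m' k'
  · obtain ⟨hi, hm, hk⟩ := this h' h heq.symm (le_of_not_ge hle)
    exact ⟨hi.symm, hm.symm, hk.symm⟩
  obtain ⟨d, rfl⟩ := Nat.exists_eq_add_of_le hle
  obtain ⟨rfl, rfl⟩ := eq_mul_pow_of_elt_eq hp heq
  obtain rfl : d = 0 := by
    by_contra hd
    have hdvd : p ∣ m * p ^ d := (dvd_pow_self p hd).mul_left m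
    rcases h' with h' | h' | h'
    · exact h' hdvd
    all_goals omega
  simp

end NormalForm

section Words

/-- The generating map `A → BS(1, p)` of the four-letter alphabet. -/
def gen (p : ℤ) : Fin 4 → BaumslagSolitar p := ![a p, (a p)⁻¹, t p, (t p)⁻¹]

/-- The involution of the four-letter alphabet corresponding to inversion in `BS(1, p)`. -/
def letterInv : Fin 4 → Fin 4 := ![1, 0, 3, 2]

/-- The set `C` of words `t⁻ⁱ aᵐ tᵏ` with `p ∤ m` or `i = 0` or `k = 0`. -/
def normalForms (p : ℤ) : Set (List (Fin 4)) :=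
  {w | ∃ (i k : ℕ) (m : ℤ), IsReduced p i m k ∧ w = bsWord i m k}

variable {i k : ℕ} {m : ℤ} {x : Fin 4}

@[simp] theorem gen_zero : gen p 0 = a p := rfl

@[simp] theorem gen_one : gen p 1 = (a p)⁻¹ := rfl

@[simp] theorem gen_two : gen p 2 = t p := rfl

@[simp] theorem gen_three : gen p 3 = (t p)⁻¹ := rfl

theorem gen_letterInv (p : ℤ) (x : Fin 4) : gen p (letterInv x) = (gen p x)⁻¹ := by
  fin_cases x <;> simp [letterInv]

@[simp] theorem eval_aWord (p m : ℤ) : eval (gen p) (aWord m) = a p ^ m := by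
  rw [aWord, eval_replicate]
  obtain ⟨n, rfl | rfl⟩ := m.eq_nat_or_neg
  · simp
  · rcases n.eq_zero_or_pos with rfl | hn
    · simp
    · simp [hn.ne']

theorem eval_bsWord (p : ℤ) (i : ℕ) (m : ℤ) (k : ℕ) :
    eval (gen p) (bsWord i m k) = elt p i m k := by
  simp [bsWord_eq, elt, mul_assoc]

theorem exists_gen_eq_a_zpow (p : ℤ) (hx : x = 0 ∨ x = 1) :
    ∃ ε : ℤ, ε.natAbs = 1 ∧ gen p x = a p ^ ε := by
  rcases hx with rfl | rfl
  · exact ⟨1, rfl, (zpow_one _).symm⟩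
  · exact ⟨-1, rfl, (zpow_neg_one _).symm⟩

theorem exists_of_edgeOnPath_aWord {g : BaumslagSolitar p} {e : BaumslagSolitar p × Fin 4}
    (h : EdgeOnPath (gen p) g (aWord m) e) :
    ∃ (j : ℤ) (x : Fin 4), (x = 0 ∨ x = 1) ∧ e = (g * a p ^ j, x) := by
  obtain ⟨n, rfl⟩ := h.exists_pow_of_replicate
  have hx : (if 0 ≤ m then (0 : Fin 4) else 1) = 0 ∨ (if 0 ≤ m then (0 : Fin 4) else 1) = 1 :=
    ite_eq_or_eq ..
  obtain ⟨ε, -, hε⟩ := exists_gen_eq_a_zpow p hx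
  exact ⟨ε * n, _, hx, by rw [hε, zpow_mul, zpow_natCast]⟩

theorem bsWord_mem_normalForms (h : IsReduced p i m k) : bsWord i m k ∈ normalForms p :=
  ⟨i, k, m, h, rfl⟩

theorem isNormalFormSet_normalForms (hp : p ≠ 0) : IsNormalFormSet (gen p) (normalForms p) := by
  intro g
  obtain ⟨i, m, k, h, rfl⟩ := exists_isReduced_elt_eq g
  refine ⟨bsWord i m k, ⟨bsWord_mem_normalForms h, eval_bsWord p i m k⟩, ?_⟩
  rintro _ ⟨⟨i', k', m', h', rfl⟩, heq⟩
  obtain ⟨rfl, rfl, rfl⟩ := h'.eq_of_elt_eq hp h (by rw [← eval_bsWord, heq])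
  rfl

end Words

section Degenerate

/-- Degeneracy of an edge with respect to the normal forms `t⁻ⁱ aᵐ tᵏ`. -/
abbrev IsDegenerateEdge (e : BaumslagSolitar p × Fin 4) : Prop :=
  IsDegenerate (gen p) letterInv (normalForms p) e

variable {i k i' k' : ℕ} {m m' : ℤ} {x : Fin 4}

theorem isDegenerateEdge_of_eq_append (h : IsReduced p i m k) (h' : IsReduced p i' m' k')
    (hw : bsWord i' m' k' = bsWord i m k ++ [x]) : IsDegenerateEdge (elt p i m k, x) := by
  rw [← eval_bsWord]
  exact isDegenerate_of_append_mem (bsWord_mem_normalForms h) (hw ▸ bsWord_mem_normalForms h')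

theorem isDegenerateEdge_of_append_inv_eq (h : IsReduced p i m k) (h' : IsReduced p i' m' k')
    (hw : bsWord i m k = bsWord i' m' k' ++ [letterInv x]) :
    IsDegenerateEdge (elt p i m k, x) := by
  rw [← eval_bsWord, hw]
  exact isDegenerate_of_append_inv_mem (gen_letterInv p x) (bsWord_mem_normalForms h')
    (hw ▸ bsWord_mem_normalForms h)

theorem isDegenerateEdge_a (p : ℤ) (i : ℕ) (m : ℤ) (hx : x = 0 ∨ x = 1) :
    IsDegenerateEdge (elt p i m 0, x) := by
  rcases hx with rfl | rfl
  · rcases le_or_gt 0 m with hm | hm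
    · exact isDegenerateEdge_of_eq_append isReduced_zero_right isReduced_zero_right
        (bsWord_add_one hm)
    · refine isDegenerateEdge_of_append_inv_eq (i' := i) (m' := m + 1)
        isReduced_zero_right isReduced_zero_right ?_
      simpa [letterInv] using bsWord_sub_one (Int.add_one_le_of_lt hm)
  · rcases le_or_gt m 0 with hm | hm
    · exact isDegenerateEdge_of_eq_append isReduced_zero_right isReduced_zero_right
        (bsWord_sub_one hm)
    · refine isDegenerateEdge_of_append_inv_eq (i' := i) (m' := m - 1)
        isReduced_zero_right isReduced_zero_right ?_
      simpa [letterInv] using bsWord_add_one (Int.le_sub_one_of_lt hm)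

theorem isDegenerateEdge_t (h : IsReduced p i m (k + 1)) : IsDegenerateEdge (elt p i m k, 2) :=
  isDegenerateEdge_of_eq_append h.of_succ_right h (bsWord_succ_right i m k)

theorem isDegenerateEdge_t_inv (h : IsReduced p i m (k + 1)) :
    IsDegenerateEdge (elt p i m (k + 1), 3) :=
  isDegenerateEdge_of_append_inv_eq h h.of_succ_right (bsWord_succ_right i m k)

theorem isDegenerateEdge_t_zero (p : ℤ) (i : ℕ) : IsDegenerateEdge (elt p (i + 1) 0 0, 2) :=
  isDegenerateEdge_of_append_inv_eq isReduced_zero_right isReduced_zero_right (bsWord_succ_left i)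

theorem isDegenerateEdge_t_inv_zero (p : ℤ) (i : ℕ) : IsDegenerateEdge (elt p i 0 0, 3) :=
  isDegenerateEdge_of_eq_append isReduced_zero_right isReduced_zero_right (bsWord_succ_left i)

theorem isDegenerateEdge_of_edgeOnPath_aWord {n : ℤ} {e : BaumslagSolitar p × Fin 4}
    (h : EdgeOnPath (gen p) (elt p i m 0) (aWord n) e) : IsDegenerateEdge e := by
  obtain ⟨j, x, hx, rfl⟩ := exists_of_edgeOnPath_aWord h
  rw [elt_mul_a_zpow]
  exact isDegenerateEdge_a p _ _ hx

end Degenerate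

section Rerouting

/-- The rank of an edge starting at `t⁻ⁱ aᵐ tᵏ` (in normal form): `k` if its label is `a^{±1}`, and
`|m|` if its label is `t^{±1}`. -/
noncomputable def rank (hp : p ≠ 0) (e : BaumslagSolitar p × Fin 4) : ℕ :=
  let y := (isNormalFormSet_normalForms hp).word e.1
  if e.2 = 0 ∨ e.2 = 1 then y.count 2 else y.count 0 + y.count 1

variable {i k : ℕ} {m : ℤ} {x : Fin 4}

theorem rank_a (hp : p ≠ 0) (h : IsReduced p i m k) (hx : x = 0 ∨ x = 1) :
    rank hp (elt p i m k, x) = k := by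
  rw [rank, if_pos hx, ← eval_bsWord, IsNormalFormSet.word_eval _ (bsWord_mem_normalForms h),
    count_two_bsWord]

theorem rank_t (hp : p ≠ 0) (h : IsReduced p i m k) (hx : x = 2 ∨ x = 3) :
    rank hp (elt p i m k, x) = m.natAbs := by
  have hx' : ¬ (x = 0 ∨ x = 1) := by rcases hx with rfl | rfl <;> decide
  rw [rank, if_neg hx', ← eval_bsWord, IsNormalFormSet.word_eval _ (bsWord_mem_normalForms h),
    count_zero_add_count_one_bsWord]

/-- An edge that can be rerouted along at most `|p| + 2` edges, each degenerate or of smaller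
`rank`. -/
abbrev IsReroutableEdge (hp : p ≠ 0) (e : BaumslagSolitar p × Fin 4) : Prop :=
  IsReroutable (gen p) letterInv (normalForms p) (rank hp) (p.natAbs + 2) e

theorem isReroutableEdge_a (hp : p ≠ 0) (h : IsReduced p i m (k + 1)) (hx : x = 0 ∨ x = 1) :
    IsReroutableEdge hp (elt p i m (k + 1), x) := by
  obtain ⟨ε, hε, hgen⟩ := exists_gen_eq_a_zpow p hx
  refine ⟨3 :: (aWord (p * ε) ++ [2]), ?_, ?_, fun e he => ?_⟩
  · simp [Int.natAbs_mul, hε]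
  · simp [hgen, ← t_mul_a_zpow]
  simp only [edgeOnPath_cons, edgeOnPath_append, not_edgeOnPath_nil, or_false, gen_three,
    elt_succ_mul_t_inv, eval_aWord, elt_mul_a_zpow] at he
  rcases he with rfl | he | rfl
  · exact .inl (isDegenerateEdge_t_inv h)
  · obtain ⟨j, x', hx', rfl⟩ := exists_of_edgeOnPath_aWord he
    rw [elt_mul_a_zpow, rank_a hp (h.of_succ_right.add_pow_mul j) hx', rank_a hp h hx]
    exact .inr k.lt_succ_self
  · rw [← mul_assoc, ← pow_succ]
    exact .inl (isDegenerateEdge_t (h.add_pow_mul ε))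

theorem isReroutableEdge_t (hp : p ≠ 0) (i : ℕ) (hm : m ≠ 0) :
    IsReroutableEdge hp (elt p (i + 1) (p * m) 0, 2) := by
  refine ⟨aWord (p * -m.sign) ++ 2 :: aWord m.sign, ?_, ?_, fun e he => ?_⟩
  · simp [Int.natAbs_mul, Int.natAbs_sign_of_ne_zero hm]
  · simp [t_mul_a_zpow]
  have hstep : p * m + p ^ 0 * (p * -m.sign) = p * (m - m.sign) := by ring
  simp only [edgeOnPath_append, edgeOnPath_cons, eval_aWord, elt_mul_a_zpow, hstep, gen_two,
    elt_mul_t, elt_succ_mul_succ] at he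
  rcases he with he | rfl | he
  · exact .inl (isDegenerateEdge_of_edgeOnPath_aWord he)
  · right
    rw [rank_t hp isReduced_zero_right (.inl rfl), rank_t hp isReduced_zero_right (.inl rfl),
      Int.natAbs_mul, Int.natAbs_mul]
    exact Nat.mul_lt_mul_of_pos_left (natAbs_sub_sign_lt hm) (Int.natAbs_pos.2 hp)
  · exact .inl (isDegenerateEdge_of_edgeOnPath_aWord he)

theorem isReroutableEdge_t_inv (hp : p ≠ 0) (i : ℕ) (hm : m ≠ 0) :
    IsReroutableEdge hp (elt p i m 0, 3) := by
  refine ⟨aWord (-m.sign) ++ 3 :: aWord (p * m.sign), ?_, ?_, fun e he => ?_⟩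
  · simp [Int.natAbs_mul, Int.natAbs_sign_of_ne_zero hm]
    omega
  · have hrel : a p ^ (p * m.sign) = t p * a p ^ m.sign * (t p)⁻¹ :=
      eq_mul_inv_of_mul_eq (t_mul_a_zpow p m.sign).symm
    simp [hrel, mul_assoc]
  have hstep : m + p ^ 0 * -m.sign = m - m.sign := by ring
  simp only [edgeOnPath_append, edgeOnPath_cons, eval_aWord, elt_mul_a_zpow, hstep, gen_three,
    elt_zero_mul_t_inv] at he
  rcases he with he | rfl | he
  · exact .inl (isDegenerateEdge_of_edgeOnPath_aWord he)
  · right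
    rw [rank_t hp isReduced_zero_right (.inr rfl), rank_t hp isReduced_zero_right (.inr rfl)]
    exact natAbs_sub_sign_lt hm
  · exact .inl (isDegenerateEdge_of_edgeOnPath_aWord he)

theorem isDegenerateEdge_or_isReroutableEdge_a (hp : p ≠ 0) (h : IsReduced p i m k)
    (hx : x = 0 ∨ x = 1) :
    IsDegenerateEdge (elt p i m k, x) ∨ IsReroutableEdge hp (elt p i m k, x) := by
  cases k with
  | zero => exact .inl (isDegenerateEdge_a p i m hx)
  | succ k => exact .inr (isReroutableEdge_a hp h hx)

theorem isDegenerateEdge_or_isReroutableEdge_t (hp : p ≠ 0) (h : IsReduced p i m k) :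
    IsDegenerateEdge (elt p i m k, 2) ∨ IsReroutableEdge hp (elt p i m k, 2) := by
  by_cases hsucc : IsReduced p i m (k + 1)
  · exact .inl (isDegenerateEdge_t hsucc)
  obtain ⟨hdvd, hi⟩ : p ∣ m ∧ i ≠ 0 := by simpa [IsReduced] using hsucc
  obtain rfl : k = 0 := (h.resolve_left (not_not.2 hdvd)).resolve_left hi
  obtain ⟨n, rfl⟩ := hdvd
  obtain ⟨i, rfl⟩ := Nat.exists_eq_succ_of_ne_zero hi
  rcases eq_or_ne n 0 with rfl | hn
  · rw [mul_zero]
    exact .inl (isDegenerateEdge_t_zero p i)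
  · exact .inr (isReroutableEdge_t hp i hn)

theorem isDegenerateEdge_or_isReroutableEdge_t_inv (hp : p ≠ 0) (h : IsReduced p i m k) :
    IsDegenerateEdge (elt p i m k, 3) ∨ IsReroutableEdge hp (elt p i m k, 3) := by
  cases k with
  | succ k => exact .inl (isDegenerateEdge_t_inv h)
  | zero =>
    rcases eq_or_ne m 0 with rfl | hm
    · exact .inl (isDegenerateEdge_t_inv_zero p i)
    · exact .inr (isReroutableEdge_t_inv hp i hm)

theorem isDegenerateEdge_or_isReroutableEdge (hp : p ≠ 0) (e : BaumslagSolitar p × Fin 4) :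
    IsDegenerateEdge e ∨ IsReroutableEdge hp e := by
  obtain ⟨g, x⟩ := e
  obtain ⟨i, m, k, h, rfl⟩ := exists_isReduced_elt_eq g
  match x with
  | 0 => exact isDegenerateEdge_or_isReroutableEdge_a hp h (.inl rfl)
  | 1 => exact isDegenerateEdge_or_isReroutableEdge_a hp h (.inr rfl)
  | 2 => exact isDegenerateEdge_or_isReroutableEdge_t hp h
  | 3 => exact isDegenerateEdge_or_isReroutableEdge_t_inv hp h

end Rerouting

end BaumslagSolitar

open BaumslagSolitar in
theorem baumslagSolitar_stackable_general {p : ℤ} (hp : p ≠ 0) :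
    ∃ lt, IsStackableStructure (gen p) letterInv (normalForms p) lt (p.natAbs + 2) :=
  have hnil : [] ∈ normalForms p := bsWord_mem_normalForms (i := 0) (m := 0) isReduced_zero_right
  exists_isStackableStructure_of_rank hnil (isNormalFormSet_normalForms hp) (by omega)
    (isDegenerateEdge_or_isReroutableEdge hp)

/-- for `p ≥ 2`, the pair `(BS(1, p), {a, a⁻¹, t, t⁻¹})` is stackable with
normal form set `{t⁻ⁱ aᵐ tᵏ : p ∤ m or i = 0 or k = 0}`. -/
theorem baumslagSolitar_stackable (p : ℤ) (hp : 2 ≤ p) :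
    ∃ (lt : BaumslagSolitar p × Fin 4 → BaumslagSolitar p × Fin 4 → Prop) (k : ℕ),
      IsStackableStructure
        (![BaumslagSolitar.a p, (BaumslagSolitar.a p)⁻¹,
           BaumslagSolitar.t p, (BaumslagSolitar.t p)⁻¹])
        (![1, 0, 3, 2])
        {w : List (Fin 4) | ∃ (i k' : ℕ) (m : ℤ),
          (¬ (p ∣ m) ∨ i = 0 ∨ k' = 0) ∧ w = bsWord i m k'}
        lt k := by
  obtain ⟨lt, h⟩ := baumslagSolitar_stackable_general (p := p) (by omega)
  exact ⟨lt, _, h⟩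

end Stk
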